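/- There exists a constant C > 0 depending only on m and n such that for every i ∈ {1, …, m}, setting β_i = m/i, for every integer t ≥ 1 and every decomposable i-vector v ∈ ⋀^i K^{m+n}: ∫_{SL_{m+n}(𝒪)} ‖g_t k · v‖^{−β_i} dλ(k) ≤ C t q^{−mnt} ‖v‖^{−β_i}, where λ is the normalized Haar probability measure on the compact group SL_{m+n}(𝒪) = {A ∈ M_{m+n}(𝒪) : det A = 1}. -/

import Mathlib

/-!
The integrand depends on `k` only through `w = k v`, and `‖k v‖ = ‖v‖` on `SL_{m+n}(𝒪)`. By left
invariance, `φ(k) = ‖g_t k v‖^{-m/i}` may be replaced by its average of `φ(h_Q k)` over any finite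
family `h_Q ∈ SL_{m+n}(𝒪)`, so it suffices to bound `∑_Q ‖g_t h_Q w‖^{-m/i}` pointwise in `w`. This
uses invariance and finite sums only: no measurability of the integrand is needed
(`lintegral_mul_left`, `sum_lintegral_le`).

The family consists of completions of the top blocks `(I_m + X A, X B)`, where the entries of `A`, `B`
run over all polynomials of degree `< T = (m + n) t i` (`exists_completion`). By Cramer's rule
`w = w' W`, where `|det W| = ‖w‖` and `w'` is integral and contains an identity block
(`exists_normal_form`). Because of this block, the top `m × i` block of `h_Q w'` is, with part of `Q`
frozen, a perturbation of a fixed integral matrix by `X` times an arbitrary polynomial matrix. A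
column-by-column count then shows that the wedge of this block has norm at most `q^{-b}` for a
proportion `O(q^{-b (m - i + 1)})` of the `Q` (`card_small`, `card_small_completion`).

If that wedge has norm `q^{-b}`, then `‖g_t h_Q w‖ ≥ q^{nti - b} ‖w‖`; when `b` reaches `T` the same
bound holds because `g_t` contracts no `i`-vector by more than `q^{-mti}` (`exists_size`). Thus scale
`b` contributes `O(q^{-mnt} q^{b (m/i - (m - i + 1))} ‖w‖^{-m/i})` to the average, and
`m/i ≤ m - i + 1` for `1 ≤ i ≤ m`. There are `T + 1 = O(t)` scales, which accounts for the factor `t`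
(`sum_le`).
-/

open MeasureTheory
open scoped Classical ENNReal

noncomputable section

variable (F : Type*) [Field F] [Fintype F]

/-- The absolute value `|x| = q^{-v(x)}` on the Laurent series field `K = 𝔽_q((X))`,
where `v` is the `X`-adic valuation (the order of vanishing). -/
def absv (x : LaurentSeries F) : ℝ :=
  if x = 0 then 0 else (Fintype.card F : ℝ) ^ (-(HahnSeries.order x))

instance : MeasurableSpace (LaurentSeries F) := borel _

instance (m n : ℕ) : MeasurableSpace (Matrix (Fin m) (Fin n) (LaurentSeries F)) := borel _

instance (d : ℕ) : MeasurableSpace (Fin d → LaurentSeries F) := borel _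

/-- the set of matrices with all entries in the valuation ring `𝒪 = 𝔽_q[[X]] = {x : |x| ≤ 1}`. -/
def intMat (m n : ℕ) : Set (Matrix (Fin m) (Fin n) (LaurentSeries F)) :=
  {s | ∀ k l, absv F (s k l) ≤ 1}

/-- sup norm of a vector in `K^d` -/
def supNorm {d : ℕ} (v : Fin d → LaurentSeries F) : ℝ := ⨆ j, absv F (v j)

/-- the `i × i` minor of a `d × i` matrix with row set `I`. -/
def minor {d i : ℕ} (s : Matrix (Fin d) (Fin i) (LaurentSeries F))
    (I : {I : Finset (Fin d) // I.card = i}) : LaurentSeries F :=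
  (s.submatrix (fun a : Fin i => ((I.1.orderIsoOfFin I.2 a : {x // x ∈ I.1}) : Fin d)) id).det

/-- The norm `‖s₁ ∧ ⋯ ∧ s_i‖` of the wedge product of the columns of a `d × i` matrix:
the maximum of the absolute values of its `i × i` minors. -/
def wedgeNorm {d i : ℕ} (s : Matrix (Fin d) (Fin i) (LaurentSeries F)) : ℝ :=
  ⨆ I : {I : Finset (Fin d) // I.card = i}, absv F (minor F s I)

/-- `X ∈ K`, the uniformizer. -/
def Xu : LaurentSeries F := HahnSeries.single 1 1

/-- the diagonal element `g_t = diag(X^{-nt} I_m, X^{mt} I_n)`. -/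
def gMat (m n : ℕ) (t : ℤ) : Matrix (Fin (m + n)) (Fin (m + n)) (LaurentSeries F) :=
  Matrix.reindex finSumFinEquiv finSumFinEquiv
    (Matrix.fromBlocks ((Xu F ^ (-(n * t))) • (1 : Matrix (Fin m) (Fin m) (LaurentSeries F))) 0 0
      ((Xu F ^ ((m : ℤ) * t)) • (1 : Matrix (Fin n) (Fin n) (LaurentSeries F))))

/-- the upper block-unipotent element `u_s` with blocks `(I_m, s; 0, I_n)`. -/
def uMat {m n : ℕ} (s : Matrix (Fin m) (Fin n) (LaurentSeries F)) :
    Matrix (Fin (m + n)) (Fin (m + n)) (LaurentSeries F) :=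
  Matrix.reindex finSumFinEquiv finSumFinEquiv (Matrix.fromBlocks 1 s 0 1)

/-- the exponent `β_i = m/i` for `i ≤ m` and `n/(m+n-i)` for `i > m`. -/
def betaE (m n i : ℕ) : ℝ := if i ≤ m then (m : ℝ) / i else (n : ℝ) / ((m + n - i : ℕ) : ℝ)

end

/-- the compact group `SL_d(𝒪) = {A ∈ M_{d,d}(𝒪) : det A = 1}`, as a subset of `M_{d,d}(K)`. -/
def SLO (F : Type*) [Field F] [Fintype F] (d : ℕ) :
    Set (Matrix (Fin d) (Fin d) (LaurentSeries F)) :=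
  {k | k ∈ intMat F d d ∧ k.det = 1}

/-! ### The absolute value -/

section AbsoluteValue

variable {F : Type*} [Field F] [Fintype F]

lemma one_lt_cardR : (1 : ℝ) < Fintype.card F := by
  exact_mod_cast Fintype.one_lt_card

lemma cardR_pos : (0 : ℝ) < Fintype.card F := by
  exact_mod_cast Fintype.card_pos

lemma absv_zero : absv F 0 = 0 := by simp [absv]

lemma absv_of_ne {x : LaurentSeries F} (hx : x ≠ 0) :
    absv F x = (Fintype.card F : ℝ) ^ (-(HahnSeries.order x)) := by simp [absv, hx]

lemma absv_nonneg (x : LaurentSeries F) : 0 ≤ absv F x := by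
  unfold absv
  split_ifs
  · exact le_rfl
  · exact zpow_nonneg cardR_pos.le _

lemma absv_pos {x : LaurentSeries F} (hx : x ≠ 0) : 0 < absv F x := by
  rw [absv_of_ne hx]
  exact zpow_pos cardR_pos _

lemma absv_eq_zero {x : LaurentSeries F} : absv F x = 0 ↔ x = 0 :=
  ⟨fun h => by_contra fun hx => (absv_pos hx).ne' h, fun h => h ▸ absv_zero⟩

lemma absv_one : absv F 1 = 1 := by
  rw [absv_of_ne one_ne_zero]
  simp

lemma absv_mul (x y : LaurentSeries F) : absv F (x * y) = absv F x * absv F y := by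
  by_cases hx : x = 0
  · simp [hx, absv_zero]
  by_cases hy : y = 0
  · simp [hy, absv_zero]
  rw [absv_of_ne hx, absv_of_ne hy, absv_of_ne (mul_ne_zero hx hy), HahnSeries.order_mul hx hy,
    neg_add, zpow_add₀ cardR_pos.ne']

/-- The absolute value as a monoid homomorphism, so that products and powers are handled by
`map_prod`, `map_zpow₀`, … -/
noncomputable def absvHom (F : Type*) [Field F] [Fintype F] : LaurentSeries F →*₀ ℝ where
  toFun := absv F
  map_zero' := absv_zero
  map_one' := absv_one
  map_mul' := absv_mul

lemma absv_prod {ι : Type*} (s : Finset ι) (f : ι → LaurentSeries F) :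
    absv F (∏ a ∈ s, f a) = ∏ a ∈ s, absv F (f a) :=
  map_prod (absvHom F) f s

lemma absv_neg (x : LaurentSeries F) : absv F (-x) = absv F x := by
  unfold absv
  simp [HahnSeries.order_neg]

lemma absv_add_le {x y : LaurentSeries F} {r : ℝ} (hx : absv F x ≤ r) (hy : absv F y ≤ r) :
    absv F (x + y) ≤ r := by
  by_cases hx0 : x = 0
  · simpa [hx0] using hy
  by_cases hy0 : y = 0
  · simpa [hy0] using hx
  by_cases hxy : x + y = 0
  · rw [hxy, absv_zero]
    exact (absv_nonneg x).trans hx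
  rw [absv_of_ne hx0] at hx
  rw [absv_of_ne hy0] at hy
  rw [absv_of_ne hxy]
  have h := HahnSeries.min_order_le_order_add hxy
  rcases min_le_iff.1 h with h | h
  · exact (zpow_le_zpow_right₀ one_lt_cardR.le (neg_le_neg h)).trans hx
  · exact (zpow_le_zpow_right₀ one_lt_cardR.le (neg_le_neg h)).trans hy

lemma absv_sub_le {x y : LaurentSeries F} {r : ℝ} (hx : absv F x ≤ r) (hy : absv F y ≤ r) :
    absv F (x - y) ≤ r := by
  rw [sub_eq_add_neg]
  exact absv_add_le hx (by rwa [absv_neg])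

lemma absv_sum_le {ι : Type*} (s : Finset ι) {f : ι → LaurentSeries F} {r : ℝ} (hr : 0 ≤ r)
    (h : ∀ a ∈ s, absv F (f a) ≤ r) : absv F (∑ a ∈ s, f a) ≤ r :=
  Finset.sum_induction f (fun x => absv F x ≤ r) (fun _ _ => absv_add_le)
    (by simpa [absv_zero] using hr) h

lemma absv_mul_le_one {x y : LaurentSeries F} (hx : absv F x ≤ 1) (hy : absv F y ≤ 1) :
    absv F (x * y) ≤ 1 := by
  rw [absv_mul]
  exact mul_le_one₀ hx (absv_nonneg y) hy

lemma absv_Xu : absv F (Xu F) = (Fintype.card F : ℝ)⁻¹ := by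
  have : Xu F ≠ 0 := by simp [Xu]
  rw [absv_of_ne this, Xu, HahnSeries.order_single one_ne_zero, zpow_neg_one]

lemma absv_Xu_zpow (z : ℤ) : absv F (Xu F ^ z) = (Fintype.card F : ℝ) ^ (-z) := by
  have h := map_zpow₀ (absvHom F) (Xu F) z
  change absv F _ = (absv F _) ^ z at h
  rw [h, absv_Xu, inv_zpow, zpow_neg]

/-- The value group is `q^ℤ`: there are no values strictly between two consecutive powers. -/
lemma absv_gap (x : LaurentSeries F) (z : ℤ) :
    absv F x ≤ (Fintype.card F : ℝ) ^ (z - 1) ∨ (Fintype.card F : ℝ) ^ z ≤ absv F x := by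
  by_cases hx : x = 0
  · left
    rw [hx, absv_zero]
    exact zpow_nonneg cardR_pos.le _
  rw [absv_of_ne hx]
  rcases lt_or_ge (-(HahnSeries.order x)) z with h | h
  · exact Or.inl (zpow_le_zpow_right₀ one_lt_cardR.le (by omega))
  · exact Or.inr (zpow_le_zpow_right₀ one_lt_cardR.le h)

lemma absv_coe_le_one (p : PowerSeries F) : absv F (HahnSeries.ofPowerSeries ℤ F p) ≤ 1 := by
  by_cases hx : HahnSeries.ofPowerSeries ℤ F p = 0
  · rw [hx, absv_zero]; exact zero_le_one
  rw [absv_of_ne hx]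
  have h0 : 0 ≤ (HahnSeries.ofPowerSeries ℤ F p).order := by
    rw [HahnSeries.le_order_iff_forall hx]
    intro j hj
    rw [HahnSeries.ofPowerSeries_apply]
    apply HahnSeries.embDomain_of_notMem_range
    rintro ⟨k, hk⟩
    simp at hk
    omega
  calc _ ≤ (Fintype.card F : ℝ) ^ (0 : ℤ) := zpow_le_zpow_right₀ one_lt_cardR.le (by omega)
    _ = 1 := zpow_zero _

lemma coeff_eq_zero_of_absv_coe_le {p : PowerSeries F} {k : ℕ}
    (h : absv F (HahnSeries.ofPowerSeries ℤ F p) ≤ (Fintype.card F : ℝ) ^ (-(k : ℤ))) :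
    ∀ j < k, PowerSeries.coeff j p = 0 := by
  intro j hj
  by_cases hx : HahnSeries.ofPowerSeries ℤ F p = 0
  · rw [← LaurentSeries.coeff_coe_powerSeries, hx]; rfl
  rw [absv_of_ne hx, zpow_le_zpow_iff_right₀ one_lt_cardR] at h
  rw [← LaurentSeries.coeff_coe_powerSeries]
  exact HahnSeries.coeff_eq_zero_of_lt_order (by omega)

/-- The polynomial of degree `< L` with prescribed coefficients, as a power series. -/
noncomputable def polyPS {L : ℕ} (p : Fin L → F) : PowerSeries F :=
  PowerSeries.mk fun j => if h : j < L then p ⟨j, h⟩ else 0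

/-- `polyPS` viewed in the Laurent series field. -/
noncomputable def polyK {L : ℕ} (p : Fin L → F) : LaurentSeries F :=
  HahnSeries.ofPowerSeries ℤ F (polyPS p)

lemma polyK_congr {L : ℕ} {p p' : Fin L → F} {k : ℕ}
    (h : absv F (polyK p - polyK p') ≤ (Fintype.card F : ℝ) ^ (-(k : ℤ))) (j : Fin L)
    (hj : (j : ℕ) < k) : p j = p' j := by
  rw [polyK, polyK, ← map_sub] at h
  have := coeff_eq_zero_of_absv_coe_le h j hj
  simpa [polyPS, sub_eq_zero] using this

end AbsoluteValue

/-! ### Counting integral matrices with small wedge -/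

section Counting

variable {F : Type*} [Field F] [Fintype F]

lemma absv_det_le_one {i : ℕ} {A : Matrix (Fin i) (Fin i) (LaurentSeries F)}
    (hA : ∀ a b, absv F (A a b) ≤ 1) : absv F A.det ≤ 1 := by
  rw [Matrix.det_apply']
  refine absv_sum_le _ zero_le_one fun σ _ => absv_mul_le_one ?_ ?_
  · rcases Int.units_eq_one_or (Equiv.Perm.sign σ) with h | h <;> simp [h, absv_neg, absv_one]
  · rw [absv_prod]
    exact Finset.prod_le_one (fun _ _ => absv_nonneg _) fun _ _ => hA _ _

/-- All `i × i` minors of `A` (with rows chosen by an arbitrary map `f`) have absolute value at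
most `q^{-ℓ}`; that is, the wedge of the columns of `A` has norm at most `q^{-ℓ}`. -/
def IsSmall {m i : ℕ} (ℓ : ℕ) (A : Matrix (Fin m) (Fin i) (LaurentSeries F)) : Prop :=
  ∀ f : Fin i → Fin m, absv F (A.submatrix f id).det ≤ (Fintype.card F : ℝ) ^ (-(ℓ : ℤ))

/-- The perturbation `B + X Q` of `B`, where the entries of `Q` are polynomials of degree `< L`.
The coefficient array `Q` is indexed by columns first. -/
noncomputable def pert {m i L : ℕ} (B : Matrix (Fin m) (Fin i) (LaurentSeries F))
    (Q : Fin i → Fin m → Fin L → F) : Matrix (Fin m) (Fin i) (LaurentSeries F) :=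
  Matrix.of fun r c => B r c + Xu F * polyK (Q c r)

lemma absv_pert_le_one {m i L : ℕ} {B : Matrix (Fin m) (Fin i) (LaurentSeries F)}
    (hB : ∀ r c, absv F (B r c) ≤ 1) (Q : Fin i → Fin m → Fin L → F) (r : Fin m) (c : Fin i) :
    absv F (pert B Q r c) ≤ 1 := by
  refine absv_add_le (hB r c) (absv_mul_le_one ?_ (absv_coe_le_one _))
  rw [absv_Xu]
  exact inv_le_one_of_one_le₀ one_lt_cardR.le

/-- Replacing the first column of a matrix by one agreeing with it off the first row changes the
determinant by the change of the corner entry times the complementary minor. -/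
lemma det_sub_of_eq_off_corner {R : Type*} [CommRing R] {i : ℕ}
    (A A' : Matrix (Fin (i + 1)) (Fin (i + 1)) R)
    (h0 : ∀ a : Fin i, A a.succ 0 = A' a.succ 0)
    (h1 : ∀ a (b : Fin i), A a b.succ = A' a b.succ) :
    A.det - A'.det = (A 0 0 - A' 0 0) * (A.submatrix Fin.succ Fin.succ).det := by
  have hs : ∀ a : Fin (i + 1),
      A.submatrix a.succAbove Fin.succ = A'.submatrix a.succAbove Fin.succ :=
    fun a => Matrix.ext fun x y => h1 _ _
  rw [Matrix.det_succ_column_zero, Matrix.det_succ_column_zero, Fin.sum_univ_succ,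
    Fin.sum_univ_succ]
  have : ∀ a : Fin i, (-1) ^ ((a.succ : Fin (i + 1)) : ℕ) * A a.succ 0 *
        (A.submatrix a.succ.succAbove Fin.succ).det
      = (-1) ^ ((a.succ : Fin (i + 1)) : ℕ) * A' a.succ 0 *
        (A'.submatrix a.succ.succAbove Fin.succ).det := fun a => by rw [h0, hs]
  rw [Finset.sum_congr rfl fun a _ => this a, hs 0]
  have h2 : A.submatrix Fin.succ Fin.succ = A'.submatrix (Fin.succAbove 0) Fin.succ := by
    rw [← hs 0]; simp
  rw [h2]
  simp
  ring

/-- With all columns but the first fixed and some `i × i` minor of theirs of absolute value at least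
`q^{-a}`, smallness of the wedge determines, given the entries of the first column in the rows of
that minor, the low-order coefficients of all other entries. -/
lemma card_column {i k m L ℓ a : ℕ} (hm : m = i + k) (hℓ : ℓ ≤ L)
    (B : Matrix (Fin m) (Fin (i + 1)) (LaurentSeries F)) (Q : Fin i → Fin m → Fin L → F)
    (f : Fin i → Fin m)
    (hf : (Fintype.card F : ℝ) ^ (-(a : ℤ)) ≤
      absv F ((pert (B.submatrix id Fin.succ) Q).submatrix f id).det) :
    ((Finset.univ.filter fun c : Fin m → Fin L → F =>
        IsSmall ℓ (pert B (Fin.cons c Q : Fin (i + 1) → Fin m → Fin L → F))).card : ℝ) ≤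
      (Fintype.card F : ℝ) ^ (L * m) * ((Fintype.card F : ℝ)⁻¹) ^ ((ℓ - 1 - a) * k) := by
  have hq := cardR_pos (F := F)
  set u := ℓ - 1 - a with hu
  have hdet : 0 < absv F ((pert (B.submatrix id Fin.succ) Q).submatrix f id).det :=
    (zpow_pos hq _).trans_le hf
  have hinj : Function.Injective f := by
    intro x y hxy
    by_contra hne
    refine hdet.ne' (absv_eq_zero.2 (Matrix.det_zero_of_row_eq hne ?_))
    ext c
    simp [hxy]
  have key : Fintype.card {c : Fin m → Fin L → F //
      IsSmall ℓ (pert B (Fin.cons c Q : Fin (i + 1) → Fin m → Fin L → F))} ≤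
      Fintype.card ((Fin i → Fin L → F) × ({r // r ∉ Set.range f} → Fin (L - u) → F)) := by
    refine Fintype.card_le_of_injective
      (fun c => (fun s => c.1 (f s), fun r j => c.1 r.1 ⟨u + j, by omega⟩)) ?_
    rintro ⟨c, hc⟩ ⟨c', hc'⟩ h
    simp only [Prod.mk.injEq] at h
    obtain ⟨h1, h2⟩ := h
    ext r j
    simp only
    by_cases hr : r ∈ Set.range f
    · obtain ⟨s, rfl⟩ := hr
      exact congrFun (congrFun h1 s) j
    by_cases hj : u ≤ j
    · have := congrFun (congrFun h2 ⟨r, hr⟩) ⟨j - u, by omega⟩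
      simpa [Nat.add_sub_cancel' hj] using this
    -- compare the minors on the rows `r, f 0, …, f (i-1)` for the two choices of column
    have e := det_sub_of_eq_off_corner
      ((pert B (Fin.cons c Q : Fin (i + 1) → Fin m → Fin L → F)).submatrix
        (Fin.cons r f : Fin (i + 1) → Fin m) id)
      ((pert B (Fin.cons c' Q : Fin (i + 1) → Fin m → Fin L → F)).submatrix
        (Fin.cons r f : Fin (i + 1) → Fin m) id)
      (fun s => by simp [pert, congrFun h1 s]) (fun s b => by simp [pert])
    have hle := absv_sub_le (hc (Fin.cons r f)) (hc' (Fin.cons r f))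
    rw [e] at hle
    have hsub : ((pert B (Fin.cons c Q : Fin (i + 1) → Fin m → Fin L → F)).submatrix
        (Fin.cons r f : Fin (i + 1) → Fin m) id).submatrix Fin.succ Fin.succ
        = (pert (B.submatrix id Fin.succ) Q).submatrix f id := by
      ext x y; simp [pert]
    rw [hsub, absv_mul] at hle
    have hcorner : ((pert B (Fin.cons c Q : Fin (i + 1) → Fin m → Fin L → F)).submatrix
        (Fin.cons r f : Fin (i + 1) → Fin m) id) 0 0 -
        ((pert B (Fin.cons c' Q : Fin (i + 1) → Fin m → Fin L → F)).submatrix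
        (Fin.cons r f : Fin (i + 1) → Fin m) id) 0 0 = Xu F * (polyK (c r) - polyK (c' r)) := by
      simp [pert]; ring
    rw [hcorner, absv_mul, absv_Xu] at hle
    refine polyK_congr (k := u) ?_ j (by omega)
    have h3 : (Fintype.card F : ℝ)⁻¹ * absv F (polyK (c r) - polyK (c' r)) *
        (Fintype.card F : ℝ) ^ (-(a : ℤ)) ≤ (Fintype.card F : ℝ) ^ (-(ℓ : ℤ)) :=
      (mul_le_mul_of_nonneg_left hf
        (mul_nonneg (inv_nonneg.2 hq.le) (absv_nonneg _))).trans hle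
    have hul : (-(u : ℤ)) = -(ℓ : ℤ) + a + 1 := by omega
    rw [hul, zpow_add₀ hq.ne', zpow_add₀ hq.ne', zpow_one]
    rw [zpow_neg _ (a : ℤ), ← div_eq_mul_inv, div_le_iff₀ (zpow_pos hq _),
      inv_mul_le_iff₀ hq] at h3
    linarith
  have hcompl : Fintype.card {r // r ∉ Set.range f} = k := by
    rw [Fintype.card_subtype_compl, Fintype.card_fin]
    have : Fintype.card {r // r ∈ Set.range f} = i := by
      rw [← Fintype.card_congr (Equiv.ofInjective f hinj), Fintype.card_fin]
    rw [this]
    omega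
  rw [← Fintype.card_subtype]
  refine (Nat.cast_le.2 key).trans (le_of_eq ?_)
  simp only [Fintype.card_prod, Fintype.card_fun, Fintype.card_fin, hcompl]
  push_cast
  have huL : u ≤ L := by omega
  obtain ⟨w, rfl⟩ := Nat.exists_eq_add_of_le huL
  have hc : (Fintype.card F : ℝ) ^ (u * k) ≠ 0 := pow_ne_zero _ hq.ne'
  rw [Nat.add_sub_cancel_left, inv_pow, eq_mul_inv_iff_mul_eq₀ hc, ← pow_mul, ← pow_mul, ← pow_add,
    ← pow_add, hm]
  congr 1
  ring

lemma exists_last_true {P : ℕ → Prop} (h0 : P 0) (ℓ : ℕ) :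
    ∃ b ≤ ℓ, P b ∧ (b = ℓ ∨ ¬ P (b + 1)) := by
  induction ℓ with
  | zero => exact ⟨0, le_rfl, h0, Or.inl rfl⟩
  | succ ℓ ih =>
    obtain ⟨b, hb, hP, h | h⟩ := ih
    · by_cases hs : P (ℓ + 1)
      · exact ⟨ℓ + 1, le_rfl, hs, Or.inl rfl⟩
      · exact ⟨b, by omega, hP, Or.inr (h ▸ hs)⟩
    · exact ⟨b, by omega, hP, Or.inr h⟩

lemma exists_large_minor {m i b : ℕ} {A : Matrix (Fin m) (Fin i) (LaurentSeries F)}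
    (h : ¬ IsSmall (b + 1) A) :
    ∃ f : Fin i → Fin m, (Fintype.card F : ℝ) ^ (-(b : ℤ)) ≤ absv F (A.submatrix f id).det := by
  unfold IsSmall at h
  push Not at h
  obtain ⟨f, hf⟩ := h
  refine ⟨f, (absv_gap _ _).resolve_left (not_le.2 ?_)⟩
  convert hf using 2
  push_cast
  ring

lemma sum_inv_pow_le_two {q : ℝ} (hq : 2 ≤ q) (ℓ : ℕ) : ∑ b ∈ Finset.range ℓ, q⁻¹ ^ b ≤ 2 := by
  have h : q⁻¹ ≤ 2⁻¹ := inv_anti₀ two_pos hq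
  calc ∑ b ∈ Finset.range ℓ, q⁻¹ ^ b ≤ ∑ b ∈ Finset.range ℓ, (1 / 2 : ℝ) ^ b :=
        Finset.sum_le_sum fun b _ =>
          pow_le_pow_left₀ (by positivity) (by simpa using h) b
    _ ≤ 2 := sum_geometric_two_le ℓ

/-- Among the perturbations `B + X Q` of an integral `m × i` matrix, `m = i + k`, the proportion of
those whose columns have wedge of norm at most `q^{-ℓ}` is `O(q^{-ℓ (k + 1)})`. The columns are
added one at a time, summing over the norm `q^{-b}` of the wedge of the previous ones. -/
lemma card_small {L m : ℕ} (i : ℕ) : ∀ (k ℓ : ℕ), m = i + k → ℓ ≤ L →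
    ∀ B : Matrix (Fin m) (Fin i) (LaurentSeries F), (∀ r c, absv F (B r c) ≤ 1) →
    ((Finset.univ.filter fun Q : Fin i → Fin m → Fin L → F => IsSmall ℓ (pert B Q)).card : ℝ) ≤
      (2 * (Fintype.card F : ℝ) ^ m) ^ i * (Fintype.card F : ℝ) ^ (L * m * i) *
        ((Fintype.card F : ℝ)⁻¹) ^ (ℓ * (k + 1)) := by
  have hq := cardR_pos (F := F)
  have hq1 := one_lt_cardR (F := F)
  have hq2 : (2 : ℝ) ≤ Fintype.card F := by exact_mod_cast Fintype.one_lt_card (α := F)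
  induction i with
  | zero =>
    intro k ℓ _ _ B _
    rcases Nat.eq_zero_or_pos ℓ with rfl | hl
    · simpa using Finset.card_le_univ
        (Finset.univ.filter fun Q : Fin 0 → Fin m → Fin L → F => IsSmall 0 (pert B Q))
    · rw [Finset.filter_false_of_mem]
      · simp
      · intro Q _ h
        have := h Fin.elim0
        rw [Matrix.det_isEmpty, absv_one] at this
        have h1 : (Fintype.card F : ℝ) ^ (-(ℓ : ℤ)) < 1 :=
          zpow_lt_one_of_neg₀ hq1 (by omega)
        linarith
  | succ i ih =>
    intro k ℓ hm hℓ B hB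
    rcases Nat.eq_zero_or_pos ℓ with rfl | hl
    · refine (Nat.cast_le.2 (Finset.card_le_univ _)).trans ?_
      simp only [Fintype.card_fun, Fintype.card_fin, zero_mul, pow_zero, mul_one]
      push_cast
      rw [← pow_mul, ← pow_mul, mul_assoc L]
      refine le_mul_of_one_le_left (by positivity) (one_le_pow₀ ?_)
      have := one_le_pow₀ hq1.le (n := m)
      linarith
    set q : ℝ := (Fintype.card F : ℝ) with hqdef
    set B' := B.submatrix id Fin.succ with hB'
    have hB1 : ∀ r c, absv F (B' r c) ≤ 1 := fun r c => hB _ _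
    have hcol : ∀ Q : Fin i → Fin m → Fin L → F,
        ((Finset.univ.filter fun c : Fin m → Fin L → F =>
          IsSmall ℓ (pert B (Fin.cons c Q : Fin (i + 1) → Fin m → Fin L → F))).card : ℝ) ≤
        ∑ b ∈ Finset.range ℓ, if IsSmall b (pert B' Q) then
          q ^ (L * m) * q⁻¹ ^ ((ℓ - 1 - b) * (k + 1)) else 0 := by
      intro Q
      obtain ⟨b, hb, hs, h⟩ := exists_last_true (P := fun b => IsSmall b (pert B' Q))
        (fun f => (absv_det_le_one fun x y => absv_pert_le_one hB1 Q (f x) y).trans_eq (by simp))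
        (ℓ - 1)
      refine le_trans ?_ (Finset.single_le_sum (fun b _ => by split_ifs <;> positivity)
        (Finset.mem_range.2 (show b < ℓ by omega)))
      rw [if_pos hs]
      rcases h with rfl | h
      · rw [Nat.sub_self, zero_mul, pow_zero, mul_one]
        refine (Nat.cast_le.2 (Finset.card_le_univ _)).trans (le_of_eq ?_)
        simp only [Fintype.card_fun, Fintype.card_fin]
        push_cast
        rw [pow_mul]
      · obtain ⟨f, hf⟩ := exists_large_minor h
        exact card_column (by omega) hℓ B Q f hf
    have hsplit : ((Finset.univ.filter fun Q : Fin (i + 1) → Fin m → Fin L → F =>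
          IsSmall ℓ (pert B Q)).card : ℝ) =
        ∑ Q : Fin i → Fin m → Fin L → F, ((Finset.univ.filter fun c : Fin m → Fin L → F =>
          IsSmall ℓ (pert B (Fin.cons c Q : Fin (i + 1) → Fin m → Fin L → F))).card : ℝ) := by
      simp only [Finset.card_filter, Nat.cast_sum]
      rw [← (Fin.consEquiv fun _ => Fin m → Fin L → F).sum_comp, Fintype.sum_prod_type_right]
      rfl
    rw [hsplit]
    calc _ ≤ ∑ Q : Fin i → Fin m → Fin L → F,
          ∑ b ∈ Finset.range ℓ, (if IsSmall b (pert B' Q) then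
            q ^ (L * m) * q⁻¹ ^ ((ℓ - 1 - b) * (k + 1)) else 0) :=
          Finset.sum_le_sum fun Q _ => hcol Q
      _ = ∑ b ∈ Finset.range ℓ, ((Finset.univ.filter fun Q : Fin i → Fin m → Fin L → F =>
            IsSmall b (pert B' Q)).card : ℝ) * (q ^ (L * m) * q⁻¹ ^ ((ℓ - 1 - b) * (k + 1))) := by
          rw [Finset.sum_comm]
          refine Finset.sum_congr rfl fun b _ => ?_
          rw [← Finset.sum_filter, Finset.sum_const, nsmul_eq_mul]
      _ ≤ ∑ b ∈ Finset.range ℓ, ((2 * q ^ m) ^ i * q ^ (L * m * (i + 1)) *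
            (q ^ m * q⁻¹ ^ (ℓ * (k + 1)))) * q⁻¹ ^ b := by
          refine Finset.sum_le_sum fun b hb => ?_
          have hb' := Finset.mem_range.1 hb
          refine (mul_le_mul_of_nonneg_right (ih (k + 1) b (by omega) (by omega) B' hB1)
            (by positivity)).trans ?_
          have e1 : q⁻¹ ^ (b * (k + 1 + 1)) * q⁻¹ ^ ((ℓ - 1 - b) * (k + 1))
              = q ^ (k + 1) * q⁻¹ ^ (ℓ * (k + 1)) * q⁻¹ ^ b := by
            obtain ⟨w, rfl⟩ := Nat.exists_eq_add_of_lt hb'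
            rw [show b + w + 1 - 1 - b = w by omega, ← pow_add,
              show (b + w + 1) * (k + 1) = (k + 1) + (b + w) * (k + 1) by ring, pow_add _ (k + 1),
              ← mul_assoc, ← mul_pow, mul_inv_cancel₀ hq.ne', one_pow, one_mul, ← pow_add]
            congr 1
            ring
          have e2 : q ^ (k + 1) ≤ q ^ m := pow_le_pow_right₀ hq1.le (by omega)
          calc _ = (2 * q ^ m) ^ i * (q ^ (L * m * i) * q ^ (L * m)) *
                (q⁻¹ ^ (b * (k + 1 + 1)) * q⁻¹ ^ ((ℓ - 1 - b) * (k + 1))) := by ring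
            _ = (2 * q ^ m) ^ i * q ^ (L * m * (i + 1)) *
                (q ^ (k + 1) * q⁻¹ ^ (ℓ * (k + 1))) * q⁻¹ ^ b := by
                rw [e1, ← pow_add, ← mul_add_one]
                ring
            _ ≤ _ := by gcongr
      _ = (2 * q ^ m) ^ i * q ^ (L * m * (i + 1)) *
            (q ^ m * q⁻¹ ^ (ℓ * (k + 1))) * ∑ b ∈ Finset.range ℓ, q⁻¹ ^ b := by
          rw [Finset.mul_sum]
      _ ≤ (2 * q ^ m) ^ i * q ^ (L * m * (i + 1)) *
            (q ^ m * q⁻¹ ^ (ℓ * (k + 1))) * 2 :=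
          mul_le_mul_of_nonneg_left (sum_inv_pow_le_two hq2 ℓ) (by positivity)
      _ = _ := by ring

end Counting

/-! ### The wedge norm -/

section WedgeNorm

variable {F : Type*} [Field F] [Fintype F]

lemma wedgeNorm_nonneg {d i : ℕ} (A : Matrix (Fin d) (Fin i) (LaurentSeries F)) :
    0 ≤ wedgeNorm F A :=
  Real.iSup_nonneg fun _ => absv_nonneg _

lemma wedgeNorm_le {d i : ℕ} {A : Matrix (Fin d) (Fin i) (LaurentSeries F)} {r : ℝ} (hr : 0 ≤ r)
    (h : ∀ f : Fin i → Fin d, absv F (A.submatrix f id).det ≤ r) : wedgeNorm F A ≤ r :=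
  Real.iSup_le (fun _ => h _) hr

/-- Minors with rows in arbitrary order, possibly repeated, are bounded by the wedge norm. -/
lemma absv_minor_le {d i : ℕ} (A : Matrix (Fin d) (Fin i) (LaurentSeries F)) (f : Fin i → Fin d) :
    absv F (A.submatrix f id).det ≤ wedgeNorm F A := by
  by_cases hf : Function.Injective f
  · let I : {I : Finset (Fin d) // I.card = i} :=
      ⟨Finset.univ.image f, by rw [Finset.card_image_of_injective _ hf, Finset.card_fin]⟩
    let o := I.1.orderIsoOfFin I.2
    have hmem : ∀ a, f a ∈ I.1 := fun a => Finset.mem_image_of_mem f (Finset.mem_univ a)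
    let s : Fin i → Fin i := fun a => o.symm ⟨f a, hmem a⟩
    have hs : Function.Injective s := fun a b h => hf (by simpa [s] using h)
    let σ : Equiv.Perm (Fin i) := Equiv.ofBijective s (Finite.injective_iff_bijective.1 hs)
    have e : A.submatrix f id =
        (A.submatrix (fun a => ((o a : {x // x ∈ I.1}) : Fin d)) id).submatrix σ id :=
      Matrix.ext fun a b => by simp [σ, s]
    have h1 : absv F (A.submatrix f id).det = absv F (minor F A I) := by
      rw [e, Matrix.det_permute, minor]
      rcases Int.units_eq_one_or (Equiv.Perm.sign σ) with h | h <;> simp [h, absv_neg, o]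
    rw [h1]
    exact le_ciSup (f := fun I => absv F (minor F A I)) (Set.finite_range _).bddAbove I
  · simp only [Function.Injective, not_forall] at hf
    obtain ⟨x, y, hxy, hne⟩ := hf
    rw [Matrix.det_zero_of_row_eq hne (by ext c; simp [hxy]), absv_zero]
    exact wedgeNorm_nonneg A

lemma exists_minor_eq {d i : ℕ} (hi : i ≤ d) (A : Matrix (Fin d) (Fin i) (LaurentSeries F)) :
    ∃ f : Fin i → Fin d, absv F (A.submatrix f id).det = wedgeNorm F A := by
  have : Nonempty {I : Finset (Fin d) // I.card = i} := by
    obtain ⟨I, -, hI⟩ := Finset.exists_subset_card_eq (s := (Finset.univ : Finset (Fin d)))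
      (n := i) (by simpa using hi)
    exact ⟨⟨I, hI⟩⟩
  obtain ⟨I, hI⟩ := exists_eq_ciSup_of_finite (f := fun I => absv F (minor F A I))
  exact ⟨_, hI⟩

/-- Integral matrices do not increase the wedge norm: by multilinearity in the rows, the minors of
`g * x` are integral combinations of the minors of `x`. -/
lemma wedgeNorm_mul_le {d i : ℕ} {g : Matrix (Fin d) (Fin d) (LaurentSeries F)}
    (hg : g ∈ intMat F d d) (x : Matrix (Fin d) (Fin i) (LaurentSeries F)) :
    wedgeNorm F (g * x) ≤ wedgeNorm F x := by
  refine wedgeNorm_le (wedgeNorm_nonneg x) fun f => ?_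
  have e : ((g * x).submatrix f id).det =
      ∑ ρ : Fin i → Fin d, (∏ a, g (f a) (ρ a)) * (x.submatrix ρ id).det := by
    have h1 := (Matrix.detRowAlternating (n := Fin i)
      (R := LaurentSeries F)).toMultilinearMap.map_sum
      (fun (a : Fin i) (r : Fin d) => g (f a) r • x r)
    have h2 : ((g * x).submatrix f id).det = (Matrix.detRowAlternating (n := Fin i)
      (R := LaurentSeries F)).toMultilinearMap
      (fun a => ∑ r : Fin d, g (f a) r • x r) := by
      change Matrix.det _ = Matrix.det _
      congr 1
      refine Matrix.ext fun a b => ?_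
      simp [Matrix.mul_apply, Finset.sum_apply]
    rw [h2, h1]
    refine Finset.sum_congr rfl fun ρ _ => ?_
    rw [MultilinearMap.map_smul_univ]
    rfl
  rw [e]
  refine absv_sum_le _ (wedgeNorm_nonneg x) fun ρ _ => ?_
  rw [absv_mul, absv_prod]
  exact (mul_le_of_le_one_left (absv_nonneg _)
    (Finset.prod_le_one (fun _ _ => absv_nonneg _) fun a _ => hg _ _)).trans (absv_minor_le x ρ)

lemma inv_mem_SLO {d : ℕ} {g : Matrix (Fin d) (Fin d) (LaurentSeries F)} (hg : g ∈ SLO F d) :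
    g⁻¹ ∈ SLO F d := by
  refine ⟨fun k l => ?_, by rw [Matrix.det_nonsing_inv, hg.2]; simp⟩
  rw [Matrix.inv_def, hg.2, Ring.inverse_one, one_smul, Matrix.adjugate_apply]
  refine absv_det_le_one fun a b => ?_
  rw [Matrix.updateRow_apply]
  split_ifs
  · rw [Pi.single_apply]
    split_ifs
    · exact absv_one.le
    · rw [absv_zero]; exact zero_le_one
  · exact hg.1 _ _

lemma le_wedgeNorm_mul {d i : ℕ} {g : Matrix (Fin d) (Fin d) (LaurentSeries F)} (hg : g ∈ SLO F d)
    (x : Matrix (Fin d) (Fin i) (LaurentSeries F)) : wedgeNorm F x ≤ wedgeNorm F (g * x) := by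
  have hdet : IsUnit g.det := by rw [hg.2]; exact isUnit_one
  calc wedgeNorm F x = wedgeNorm F (g⁻¹ * (g * x)) := by
        rw [Matrix.nonsing_inv_mul_cancel_left _ _ hdet]
    _ ≤ _ := wedgeNorm_mul_le (inv_mem_SLO hg).1 _

lemma gMat_eq_diagonal {E : Type*} [Field E] (m n : ℕ) (t : ℤ) : gMat E m n t = Matrix.diagonal
    (Sum.elim (fun _ : Fin m => Xu E ^ (-(n * t))) (fun _ : Fin n => Xu E ^ ((m : ℤ) * t)) ∘
      finSumFinEquiv.symm) := by
  rw [gMat, Matrix.smul_one_eq_diagonal, Matrix.smul_one_eq_diagonal, Matrix.fromBlocks_diagonal,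
    Matrix.reindex_apply, Matrix.submatrix_diagonal_equiv]

lemma absv_minor_diagonal_mul {d i : ℕ} (D : Fin d → LaurentSeries F)
    (x : Matrix (Fin d) (Fin i) (LaurentSeries F)) (f : Fin i → Fin d) :
    absv F ((Matrix.diagonal D * x).submatrix f id).det =
      (∏ a, absv F (D (f a))) * absv F (x.submatrix f id).det := by
  rw [← absv_prod, ← absv_mul, ← Matrix.det_mul_column]
  congr 2
  exact Matrix.ext fun a b => by simp [Matrix.diagonal_mul]

/-- On the minors supported in the first `m` rows, `g_t` expands by `q^{nti}`. -/
lemma le_wedgeNorm_gMat_top {m n i : ℕ} (t : ℕ)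
    (x : Matrix (Fin (m + n)) (Fin i) (LaurentSeries F)) (f : Fin i → Fin m) :
    (Fintype.card F : ℝ) ^ ((n * t * i : ℕ) : ℤ) *
        absv F ((x.submatrix (Fin.castAdd n) id).submatrix f id).det ≤
      wedgeNorm F (gMat F m n t * x) := by
  refine le_trans (le_of_eq ?_) (absv_minor_le _ (Fin.castAdd n ∘ f))
  rw [gMat_eq_diagonal, absv_minor_diagonal_mul]
  congr 1
  simp only [Function.comp_apply, finSumFinEquiv_symm_apply_castAdd, Sum.elim_inl, absv_Xu_zpow,
    neg_neg, Finset.prod_const, Finset.card_fin]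
  rw [← zpow_natCast, ← zpow_mul]
  push_cast
  rfl

/-- `g_t` contracts no `i`-vector by more than `q^{-mti}`. -/
lemma le_wedgeNorm_gMat {m n i : ℕ} (hi : i ≤ m + n) (t : ℕ)
    (x : Matrix (Fin (m + n)) (Fin i) (LaurentSeries F)) :
    (Fintype.card F : ℝ) ^ (-((m * t * i : ℕ) : ℤ)) * wedgeNorm F x ≤
      wedgeNorm F (gMat F m n t * x) := by
  obtain ⟨f, hf⟩ := exists_minor_eq hi x
  refine le_trans ?_ (absv_minor_le _ f)
  rw [gMat_eq_diagonal, absv_minor_diagonal_mul, hf]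
  refine mul_le_mul_of_nonneg_right ?_ (wedgeNorm_nonneg x)
  have h1 : ∀ a, (Fintype.card F : ℝ) ^ (-((m : ℤ) * t)) ≤
      absv F ((Sum.elim (fun _ : Fin m => Xu F ^ (-((n : ℤ) * t)))
        (fun _ : Fin n => Xu F ^ ((m : ℤ) * t)) ∘ finSumFinEquiv.symm) (f a)) := by
    intro a
    simp only [Function.comp_apply]
    rcases finSumFinEquiv.symm (f a) with r | r
    · simp only [Sum.elim_inl, absv_Xu_zpow, neg_neg]
      have a1 : (0 : ℤ) ≤ (m : ℤ) * t := by positivity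
      have a2 : (0 : ℤ) ≤ (n : ℤ) * t := by positivity
      exact zpow_le_zpow_right₀ one_lt_cardR.le (by omega)
    · simp only [Sum.elim_inr, absv_Xu_zpow]
      exact le_rfl
  calc _ = ∏ _a : Fin i, (Fintype.card F : ℝ) ^ (-((m : ℤ) * t)) := by
        rw [Finset.prod_const, Finset.card_fin, ← zpow_natCast, ← zpow_mul]
        push_cast
        ring_nf
    _ ≤ _ := Finset.prod_le_prod (fun _ _ => zpow_nonneg cardR_pos.le _) fun a _ => h1 a

/-- Cramer's rule: factoring out a minor of maximal absolute value, a nonzero decomposable vector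
is a scalar multiple of one given by an integral matrix containing an identity block. -/
lemma exists_normal_form {d i : ℕ} (hi : i ≤ d) (w : Matrix (Fin d) (Fin i) (LaurentSeries F))
    (hw : 0 < wedgeNorm F w) :
    ∃ (f : Fin i → Fin d) (w' : Matrix (Fin d) (Fin i) (LaurentSeries F))
      (W : Matrix (Fin i) (Fin i) (LaurentSeries F)), Function.Injective f ∧ w = w' * W ∧
      w'.submatrix f id = 1 ∧ (∀ r c, absv F (w' r c) ≤ 1) ∧ absv F W.det = wedgeNorm F w := by
  obtain ⟨f, hf⟩ := exists_minor_eq hi w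
  set W := w.submatrix f id with hW
  have hdet0 : W.det ≠ 0 := fun h => by rw [h, absv_zero] at hf; exact hw.ne hf
  have hdet : IsUnit W.det := isUnit_iff_ne_zero.2 hdet0
  have hfac : w = (w * W⁻¹) * W := by rw [Matrix.nonsing_inv_mul_cancel_right _ _ hdet]
  have hone : (w * W⁻¹).submatrix f id = 1 := by
    have : (w * W⁻¹).submatrix f id = W * W⁻¹ := Matrix.ext fun a b => by
      simp [Matrix.mul_apply, hW]
    rw [this, Matrix.mul_nonsing_inv _ hdet]
  refine ⟨f, w * W⁻¹, W, ?_, hfac, hone, fun r c => ?_, hf⟩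
  · intro x y hxy
    by_contra hne
    exact hdet0 (Matrix.det_zero_of_row_eq hne (by ext c; simp [hW, hxy]))
  · have h1 : ((w * W⁻¹).submatrix (Function.update f c r) id).det = (w * W⁻¹) r c := by
      have e : (w * W⁻¹).submatrix (Function.update f c r) id =
          (1 : Matrix (Fin i) (Fin i) (LaurentSeries F)).updateRow c ((w * W⁻¹) r) := by
        refine Matrix.ext fun a b => ?_
        rw [Matrix.updateRow_apply, ← hone]
        by_cases h : a = c
        · subst h; simp
        · simp [h]
      rw [e, ← Matrix.cramer_transpose_apply]
      simp
    have h2 : absv F (w.submatrix (Function.update f c r) id).det =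
        absv F ((w * W⁻¹) r c) * wedgeNorm F w := by
      rw [← h1, ← hf, ← absv_mul, ← Matrix.det_mul]
      congr 2
      conv_lhs => rw [hfac]
      exact Matrix.ext fun a b => by simp [Matrix.mul_apply]
    have h3 := absv_minor_le w (Function.update f c r)
    rw [h2] at h3
    exact le_of_mul_le_mul_right (by simpa using h3) hw

end WedgeNorm

/-! ### Averaging over completions -/

section Averaging

variable {F : Type*} [Field F] [Fintype F]

/-- Every `m × (m + n)` matrix `(I_m + X A, X B)` with polynomial `A`, `B` is the top block of an
element of `SL_{m+n}(𝒪)`: complete it by `diag(det(I_m + X A)⁻¹, 1, …, 1)` in the lower right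
corner. -/
lemma exists_completion {m n L : ℕ} (hn : 1 ≤ n) (Q : Fin (m + n) → Fin m → Fin L → F) :
    ∃ h ∈ SLO F (m + n), ∀ (r : Fin m) (s : Fin (m + n)),
      h (Fin.castAdd n r) s =
        (if Fin.castAdd n r = s then 1 else 0) + Xu F * polyK (Q s r) := by
  obtain ⟨n, rfl⟩ : ∃ n', n = n' + 1 := ⟨n - 1, by omega⟩
  let A : Matrix (Fin m) (Fin m) (PowerSeries F) :=
    1 + (PowerSeries.X : PowerSeries F) • Matrix.of fun r s => polyPS (Q (Fin.castAdd (n + 1) s) r)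
  let B : Matrix (Fin m) (Fin (n + 1)) (PowerSeries F) :=
    (PowerSeries.X : PowerSeries F) • Matrix.of fun r s => polyPS (Q (Fin.natAdd m s) r)
  have hA : IsUnit A.det := by
    rw [PowerSeries.isUnit_iff_constantCoeff, RingHom.map_det]
    have : (PowerSeries.constantCoeff (R := F)).mapMatrix A = 1 := by
      refine Matrix.ext fun r s => ?_
      simp only [A, RingHom.mapMatrix_apply, Matrix.map_apply, Matrix.add_apply, Matrix.smul_apply,
        smul_eq_mul, map_add, map_mul, PowerSeries.constantCoeff_X, zero_mul, add_zero,
        Matrix.one_apply]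
      split_ifs <;> simp
    rw [this, Matrix.det_one]
    exact isUnit_one
  obtain ⟨u, hu⟩ := hA
  let D : Matrix (Fin (n + 1)) (Fin (n + 1)) (PowerSeries F) :=
    Matrix.diagonal (Pi.mulSingle 0 (↑u⁻¹ : PowerSeries F))
  have hD : D.det = ↑u⁻¹ := by
    simp [D, Matrix.det_diagonal, Pi.mulSingle_apply]
  let H : Matrix (Fin (m + (n + 1))) (Fin (m + (n + 1))) (PowerSeries F) :=
    Matrix.reindex finSumFinEquiv finSumFinEquiv (Matrix.fromBlocks A B 0 D)
  have hH : H.det = 1 := by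
    simp only [H]
    rw [Matrix.det_reindex_self, Matrix.det_fromBlocks_zero₂₁, hD, ← hu, Units.mul_inv]
  refine ⟨(HahnSeries.ofPowerSeries ℤ F).mapMatrix H, ⟨fun k l => absv_coe_le_one _, ?_⟩, ?_⟩
  · rw [← RingHom.map_det, hH, map_one]
  · intro r s
    refine Fin.addCases (fun s => ?_) (fun s => ?_) s
    · have : H (Fin.castAdd (n + 1) r) (Fin.castAdd (n + 1) s) = A r s := by simp [H]
      rw [RingHom.mapMatrix_apply, Matrix.map_apply, this]
      simp only [A, Matrix.add_apply, Matrix.one_apply, Matrix.smul_apply, smul_eq_mul, map_add,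
        map_mul, HahnSeries.ofPowerSeries_X, Matrix.of_apply, (Fin.castAdd_injective _ _).eq_iff]
      congr 1
      split_ifs <;> simp
    · have : H (Fin.castAdd (n + 1) r) (Fin.natAdd m s) = B r s := by simp [H]
      rw [RingHom.mapMatrix_apply, Matrix.map_apply, this]
      have hne : Fin.castAdd (n + 1) r ≠ Fin.natAdd m s := by
        intro h
        have := congrArg Fin.val h
        simp at this
        omega
      simp only [B, Matrix.smul_apply, smul_eq_mul, map_mul, HahnSeries.ofPowerSeries_X,
        Matrix.of_apply, if_neg hne, zero_add]
      rfl

/-- The proportion of completions `h_Q` for which the top block of `h_Q w'` has small wedge, for a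
matrix `w'` in normal form. Freezing the columns of `Q` that do not meet the identity block of `w'`
turns the top block into a perturbation of a fixed integral matrix. -/
lemma card_small_completion {m n i k L ℓ : ℕ} (hm : m = i + k) (hℓ : ℓ ≤ L)
    {h : (Fin (m + n) → Fin m → Fin L → F) →
      Matrix (Fin (m + n)) (Fin (m + n)) (LaurentSeries F)}
    (hh : ∀ Q (r : Fin m) (s : Fin (m + n)), h Q (Fin.castAdd n r) s =
        (if Fin.castAdd n r = s then 1 else 0) + Xu F * polyK (Q s r))
    {f : Fin i → Fin (m + n)} (hf : Function.Injective f)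
    {w : Matrix (Fin (m + n)) (Fin i) (LaurentSeries F)}
    (hw : w.submatrix f id = 1) (hw1 : ∀ r c, absv F (w r c) ≤ 1) :
    ((Finset.univ.filter fun Q => IsSmall ℓ ((h Q * w).submatrix (Fin.castAdd n) id)).card : ℝ) ≤
      (2 * (Fintype.card F : ℝ) ^ m) ^ i * (Fintype.card F : ℝ) ^ (L * m * (m + n)) *
        ((Fintype.card F : ℝ)⁻¹) ^ (ℓ * (k + 1)) := by
  have hq := cardR_pos (F := F)
  let ρ : (Fin (m + n) → Fin m → Fin L → F) → ({s // s ∉ Set.range f} → Fin m → Fin L → F) :=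
    fun Q s => Q s
  let B : ({s // s ∉ Set.range f} → Fin m → Fin L → F) → Matrix (Fin m) (Fin i) (LaurentSeries F) :=
    fun R => Matrix.of fun r c => w (Fin.castAdd n r) c + Xu F * ∑ s, polyK (R s r) * w s.1 c
  have hB1 : ∀ R r c, absv F (B R r c) ≤ 1 := by
    intro R r c
    refine absv_add_le (hw1 _ _) (absv_mul_le_one ?_
      (absv_sum_le _ zero_le_one fun s _ => absv_mul_le_one (absv_coe_le_one _) (hw1 _ _)))
    rw [absv_Xu]
    exact inv_le_one_of_one_le₀ one_lt_cardR.le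
  have htop : ∀ Q, (h Q * w).submatrix (Fin.castAdd n) id = pert (B (ρ Q)) (Q ∘ f) := by
    intro Q
    refine Matrix.ext fun r c => ?_
    have hsplit : ∑ s, polyK (Q s r) * w s c =
        ∑ s : {s // s ∉ Set.range f}, polyK (Q s r) * w s c + polyK (Q (f c) r) := by
      have hin : ∑ s : {s // s ∈ Set.range f}, polyK (Q s.1 r) * w s.1 c = polyK (Q (f c) r) := by
        rw [← (Equiv.ofInjective f hf).sum_comp]
        simp only [Equiv.ofInjective_apply]
        have : ∀ a, w (f a) c = (1 : Matrix (Fin i) (Fin i) (LaurentSeries F)) a c := fun a => by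
          rw [← hw]; rfl
        simp [this, Matrix.one_apply]
      rw [← hin]
      convert ((add_comm _ _).trans (Fintype.sum_subtype_add_sum_subtype (fun s => s ∈ Set.range f)
        fun s => polyK (Q s r) * w s c)).symm
    simp only [Matrix.submatrix_apply, id_eq, Matrix.mul_apply, hh, pert, B, ρ, Matrix.of_apply,
      Function.comp_apply]
    simp only [add_mul, Finset.sum_add_distrib, ite_mul, one_mul, zero_mul, Finset.sum_ite_eq,
      Finset.mem_univ, if_true, mul_assoc, ← Finset.mul_sum]
    rw [hsplit]
    ring
  have hcompl : Fintype.card {s // s ∉ Set.range f} = m + n - i := by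
    rw [Fintype.card_subtype_compl, Fintype.card_fin]
    have : Fintype.card {r // r ∈ Set.range f} = i := by
      rw [← Fintype.card_congr (Equiv.ofInjective f hf), Fintype.card_fin]
    rw [this]
  rw [Finset.card_eq_sum_card_fiberwise (f := ρ) (t := Finset.univ) (fun _ _ => by simp)]
  push_cast
  calc _ ≤ ∑ _R : ({s // s ∉ Set.range f} → Fin m → Fin L → F),
        (2 * (Fintype.card F : ℝ) ^ m) ^ i * (Fintype.card F : ℝ) ^ (L * m * i) *
        ((Fintype.card F : ℝ)⁻¹) ^ (ℓ * (k + 1)) := by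
        refine Finset.sum_le_sum fun R _ => ?_
        refine le_trans (Nat.cast_le.2 ?_) (card_small i k ℓ hm hℓ (B R) (hB1 R))
        refine Finset.card_le_card_of_injOn (fun Q => Q ∘ f) ?_ ?_
        · intro Q hQ
          simp only [Finset.coe_filter, Finset.mem_filter, Finset.mem_univ, true_and,
            Set.mem_ofPred_eq] at hQ ⊢
          rw [← hQ.2, ← htop]
          exact hQ.1
        · intro Q hQ Q' hQ' hQQ
          simp only [Finset.coe_filter, Finset.mem_filter, Finset.mem_univ, true_and,
            Set.mem_ofPred_eq] at hQ hQ'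
          funext s
          by_cases hs : s ∈ Set.range f
          · obtain ⟨a, rfl⟩ := hs
            exact congrFun hQQ a
          · exact congrFun (hQ.2.trans hQ'.2.symm) ⟨s, hs⟩
    _ = _ := by
        rw [Finset.sum_const, Finset.card_univ, nsmul_eq_mul]
        simp only [Fintype.card_fun, Fintype.card_fin, hcompl]
        push_cast
        have : L * m * (m + n) = L * m * i + L * m * (m + n - i) := by
          rw [← mul_add]
          congr 1
          omega
        rw [this, pow_add, ← pow_mul, ← pow_mul]
        ring

/-- If `b` is the (truncated) size `q^{-b}` of the wedge of the top block of `h w'`, then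
`‖g_t h w‖ ≥ q^{nti - b} ‖w‖`: below the truncation the top block is used, at the truncation the
worst contraction rate of `g_t`. -/
lemma exists_size {m n i t : ℕ} (hi : i ≤ m + n)
    {h : Matrix (Fin (m + n)) (Fin (m + n)) (LaurentSeries F)} (hh : h ∈ SLO F (m + n))
    {w w' : Matrix (Fin (m + n)) (Fin i) (LaurentSeries F)}
    {W : Matrix (Fin i) (Fin i) (LaurentSeries F)} (hw : w = w' * W)
    (hw1 : ∀ r c, absv F (w' r c) ≤ 1) (hW : absv F W.det = wedgeNorm F w) :
    ∃ b ≤ (m + n) * t * i, IsSmall b ((h * w').submatrix (Fin.castAdd n) id) ∧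
      (Fintype.card F : ℝ) ^ (((n * t * i : ℕ) : ℤ) - b) * wedgeNorm F w ≤
        wedgeNorm F (gMat F m n t * h * w) := by
  have hq := cardR_pos (F := F)
  have hint : ∀ r c, absv F ((h * w') r c) ≤ 1 := fun r c => by
    rw [Matrix.mul_apply]
    exact absv_sum_le _ zero_le_one fun s _ => absv_mul_le_one (hh.1 _ _) (hw1 _ _)
  obtain ⟨b, hb, hs, hlast⟩ := exists_last_true
    (P := fun b => IsSmall b ((h * w').submatrix (Fin.castAdd n) id))
    (fun f => (absv_det_le_one fun x y => hint (Fin.castAdd n (f x)) y).trans_eq (by simp))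
    ((m + n) * t * i)
  refine ⟨b, hb, hs, ?_⟩
  rw [Matrix.mul_assoc]
  rcases hlast with rfl | hlast
  · refine le_trans ?_ (le_wedgeNorm_gMat hi t (h * w))
    have : ((n * t * i : ℕ) : ℤ) - ((m + n) * t * i : ℕ) = -((m * t * i : ℕ) : ℤ) := by
      push_cast; ring
    rw [this]
    exact mul_le_mul_of_nonneg_left (le_wedgeNorm_mul hh w) (zpow_nonneg hq.le _)
  · obtain ⟨f, hf⟩ := exists_large_minor hlast
    refine le_trans ?_ (le_wedgeNorm_gMat_top t (h * w) f)
    have e : ((h * w).submatrix (Fin.castAdd n) id).submatrix f id =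
        ((h * w').submatrix (Fin.castAdd n) id).submatrix f id * W := by
      rw [hw, ← Matrix.mul_assoc]
      exact Matrix.ext fun a b => by simp [Matrix.mul_apply]
    rw [e, Matrix.det_mul, absv_mul, hW, sub_eq_add_neg, zpow_add₀ hq.ne', mul_assoc]
    have := wedgeNorm_nonneg w
    gcongr

/-- The contribution of the completions for which the top block has wedge of size `q^{-b}`. The
exponents match because `m / i ≤ m - i + 1` for `1 ≤ i ≤ m`. -/
lemma scale_bound {q M : ℝ} (hq1 : 1 < q) (hM : 0 < M) {m n i t k : ℕ} (hi1 : 1 ≤ i)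
    (hk : m = i + k) (b : ℕ) :
    (q ^ (((n * t * i : ℕ) : ℤ) - b) * M) ^ (-((m : ℝ) / i)) ≤
      q ^ (-(m * n * t : ℤ)) * M ^ (-((m : ℝ) / i)) * q ^ (b * (k + 1)) := by
  have hq : 0 < q := one_pos.trans hq1
  have hi0 : (0 : ℝ) < i := by exact_mod_cast hi1
  have hβ : (m : ℝ) / i ≤ k + 1 := by
    rw [div_le_iff₀ hi0]
    have h1 : (1 : ℝ) ≤ i := by exact_mod_cast hi1
    have h2 : (0 : ℝ) ≤ k := by positivity
    rw [hk]
    push_cast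
    nlinarith
  rw [Real.mul_rpow (zpow_nonneg hq.le _) hM.le, mul_right_comm (q ^ (-(m * n * t : ℤ)))]
  refine mul_le_mul_of_nonneg_right ?_ (Real.rpow_nonneg hM.le _)
  rw [← Real.rpow_intCast, ← Real.rpow_mul hq.le, ← Real.rpow_intCast, ← Real.rpow_natCast,
    ← Real.rpow_add hq]
  refine Real.rpow_le_rpow_of_exponent_le hq1.le ?_
  push_cast
  have e : ((n : ℝ) * t * i - b) * (-((m : ℝ) / i)) = -(m * n * t) + b * (m / i) := by
    field_simp
    ring
  rw [e]
  gcongr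

/-- The pointwise bound: averaging over the completions `h_Q`, with polynomials of degree
`< T = (m + n) t i`, gives the desired estimate for every single decomposable vector. The factor `t`
comes from the number of scales `b ≤ (m + n) t i`, each contributing the same order of magnitude. -/
lemma sum_le {m n i t T : ℕ} (hT : T = (m + n) * t * i) (hi1 : 1 ≤ i) (him : i ≤ m) (ht : 1 ≤ t)
    {h : (Fin (m + n) → Fin m → Fin T → F) →
      Matrix (Fin (m + n)) (Fin (m + n)) (LaurentSeries F)}
    (hS : ∀ Q, h Q ∈ SLO F (m + n))
    (hh : ∀ Q (r : Fin m) (s : Fin (m + n)), h Q (Fin.castAdd n r) s =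
        (if Fin.castAdd n r = s then 1 else 0) + Xu F * polyK (Q s r))
    (w : Matrix (Fin (m + n)) (Fin i) (LaurentSeries F)) (hw : 0 < wedgeNorm F w) :
    ∑ Q, (ENNReal.ofReal (wedgeNorm F (gMat F m n t * h Q * w))) ^ (-((m : ℝ) / i)) ≤
      Fintype.card (Fin (m + n) → Fin m → Fin T → F) *
      (ENNReal.ofReal ((((m + n) * m + 1) * (2 * (Fintype.card F : ℝ) ^ m) ^ m) * (t : ℝ) *
        (Fintype.card F : ℝ) ^ (-(m * n * t : ℤ))) *
        (ENNReal.ofReal (wedgeNorm F w)) ^ (-((m : ℝ) / i))) := by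
  have hq := cardR_pos (F := F)
  have hq1 := one_lt_cardR (F := F)
  obtain ⟨k, hk⟩ := Nat.exists_eq_add_of_le him
  obtain ⟨f, w', W, hf, hfac, hone, hw1, hW⟩ := exists_normal_form (by omega) w hw
  set q : ℝ := (Fintype.card F : ℝ) with hqdef
  set M := wedgeNorm F w with hM
  set G : ℝ := q ^ (-(m * n * t : ℤ)) * M ^ (-((m : ℝ) / i)) with hG
  have hG0 : 0 ≤ G := by positivity
  have hscale := scale_bound (n := n) (t := t) hq1 hw hi1 hk
  have hpt : ∀ Q, (ENNReal.ofReal (wedgeNorm F (gMat F m n t * h Q * w))) ^ (-((m : ℝ) / i)) ≤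
      ENNReal.ofReal (∑ b ∈ Finset.range (T + 1),
        if IsSmall b ((h Q * w').submatrix (Fin.castAdd n) id) then G * q ^ (b * (k + 1)) else 0) :=
    by
    intro Q
    obtain ⟨b, hb, hs, hle⟩ := exists_size (t := t) (by omega) (hS Q) hfac hw1 hW
    rw [← hT] at hb
    have hpos : 0 < q ^ (((n * t * i : ℕ) : ℤ) - b) * M := mul_pos (zpow_pos hq _) hw
    rw [ENNReal.ofReal_rpow_of_pos (hpos.trans_le hle)]
    refine ENNReal.ofReal_le_ofReal ?_
    refine (Real.rpow_le_rpow_of_nonpos hpos hle (by simp; positivity)).trans ((hscale b).trans ?_)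
    refine le_trans ?_ (Finset.single_le_sum (fun b _ => by split_ifs <;> positivity)
      (Finset.mem_range.2 (show b < T + 1 by omega)))
    rw [if_pos hs]
  have hreal : ∑ Q, ∑ b ∈ Finset.range (T + 1),
        (if IsSmall b ((h Q * w').submatrix (Fin.castAdd n) id) then G * q ^ (b * (k + 1)) else 0) ≤
      (Fintype.card (Fin (m + n) → Fin m → Fin T → F) : ℝ) *
        ((((m + n) * m + 1) * (2 * q ^ m) ^ m) * (t : ℝ) * q ^ (-(m * n * t : ℤ)) *
          M ^ (-((m : ℝ) / i))) := by
    have hcard : (Fintype.card (Fin (m + n) → Fin m → Fin T → F) : ℝ) = q ^ (T * m * (m + n)) := by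
      simp only [Fintype.card_fun, Fintype.card_fin]
      push_cast
      rw [← pow_mul, ← pow_mul, ← mul_assoc]
    rw [Finset.sum_comm, hcard]
    calc _ ≤ ∑ b ∈ Finset.range (T + 1), (2 * q ^ m) ^ i * q ^ (T * m * (m + n)) * G := by
          refine Finset.sum_le_sum fun b hb => ?_
          rw [← Finset.sum_filter, Finset.sum_const, nsmul_eq_mul]
          have hb' : b ≤ T := by have := Finset.mem_range.1 hb; omega
          refine (mul_le_mul_of_nonneg_right (card_small_completion hk hb' hh hf hone hw1)
            (by positivity)).trans (le_of_eq ?_)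
          rw [inv_pow, ← hqdef]
          have : q ^ (b * (k + 1)) ≠ 0 := by positivity
          field_simp
      _ = ((T : ℝ) + 1) * ((2 * q ^ m) ^ i * q ^ (T * m * (m + n)) * G) := by
          rw [Finset.sum_const, Finset.card_range, nsmul_eq_mul]
          push_cast
          rfl
      _ ≤ (((m + n) * m + 1) * t) * ((2 * q ^ m) ^ m * q ^ (T * m * (m + n)) * G) := by
          have h1 : (T : ℝ) + 1 ≤ ((m + n) * m + 1) * t := by
            have : T + 1 ≤ ((m + n) * m + 1) * t := by
              have : T ≤ (m + n) * t * m := by rw [hT]; exact Nat.mul_le_mul_left _ him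
              nlinarith
            exact_mod_cast this
          have h2 : (1 : ℝ) ≤ 2 * q ^ m := by
            have := one_le_pow₀ hq1.le (n := m)
            linarith
          have h3 := pow_le_pow_right₀ h2 him
          gcongr
      _ = _ := by rw [hG]; ring
  calc _ ≤ ∑ Q, ENNReal.ofReal (∑ b ∈ Finset.range (T + 1),
        if IsSmall b ((h Q * w').submatrix (Fin.castAdd n) id) then
          G * q ^ (b * (k + 1)) else 0) := Finset.sum_le_sum fun Q _ => hpt Q
    _ = ENNReal.ofReal (∑ Q, ∑ b ∈ Finset.range (T + 1),
        if IsSmall b ((h Q * w').submatrix (Fin.castAdd n) id) then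
          G * q ^ (b * (k + 1)) else 0) :=
        (ENNReal.ofReal_sum_of_nonneg fun Q _ => Finset.sum_nonneg fun b _ => by
          split_ifs <;> positivity).symm
    _ ≤ _ := ENNReal.ofReal_le_ofReal hreal
    _ = _ := by
        rw [ENNReal.ofReal_mul (by positivity), ENNReal.ofReal_natCast,
          ENNReal.ofReal_mul (by positivity), ENNReal.ofReal_rpow_of_pos hw]

end Averaging

/-! ### Invariance of the measure -/

section Invariance

variable {F : Type*} [Field F] [Fintype F]

instance (m n : ℕ) : BorelSpace (Matrix (Fin m) (Fin n) (LaurentSeries F)) := ⟨rfl⟩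

/-- Left multiplication by an invertible matrix, as a measurable equivalence; it makes invariance of
`lam` applicable to integrands without any measurability hypothesis. -/
noncomputable def mulLeftEquiv {d : ℕ} {g : Matrix (Fin d) (Fin d) (LaurentSeries F)}
    (hg : IsUnit g.det) :
    Matrix (Fin d) (Fin d) (LaurentSeries F) ≃ᵐ Matrix (Fin d) (Fin d) (LaurentSeries F) :=
  Homeomorph.toMeasurableEquiv
    { toFun := fun k => g * k
      invFun := fun k => g⁻¹ * k
      left_inv := fun _ => Matrix.nonsing_inv_mul_cancel_left _ _ hg
      right_inv := fun _ => Matrix.mul_nonsing_inv_cancel_left _ _ hg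
      continuous_toFun := continuous_const.matrix_mul continuous_id
      continuous_invFun := continuous_const.matrix_mul continuous_id }

lemma lintegral_mul_left {d : ℕ} {lam : Measure (Matrix (Fin d) (Fin d) (LaurentSeries F))}
    (hinv : ∀ g ∈ SLO F d, lam.map (fun k => g * k) = lam)
    {g : Matrix (Fin d) (Fin d) (LaurentSeries F)} (hg : g ∈ SLO F d)
    (φ : Matrix (Fin d) (Fin d) (LaurentSeries F) → ℝ≥0∞) :
    ∫⁻ k, φ (g * k) ∂lam = ∫⁻ k, φ k ∂lam := by
  have hdet : IsUnit g.det := by rw [hg.2]; exact isUnit_one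
  have h := lintegral_map_equiv (μ := lam) φ (mulLeftEquiv hdet)
  have e : lam.map (mulLeftEquiv hdet) = lam := hinv g hg
  rw [e] at h
  exact h.symm

/-- The integral of a sum dominates the sum of the integrals, without measurability. -/
lemma sum_lintegral_le {α ι : Type*} [MeasurableSpace α] (μ : Measure α) (s : Finset ι)
    (φ : ι → α → ℝ≥0∞) : ∑ a ∈ s, ∫⁻ x, φ a x ∂μ ≤ ∫⁻ x, ∑ a ∈ s, φ a x ∂μ := by
  induction s using Finset.induction_on with
  | empty => simp
  | insert a s ha ih =>
    simp only [Finset.sum_insert ha]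
    exact (add_le_add le_rfl ih).trans (le_lintegral_add _ _)

end Invariance

/-- **Proposition 3.8.** There is `C > 0` depending only on `m, n` such that for every
`i ∈ {1, …, m}`, with `β_i = m/i`, every integer `t ≥ 1` and every decomposable `i`-vector
`v ∈ ⋀^i K^{m+n}` (given by the columns of a `(m+n) × i` matrix),
`∫_{SL_{m+n}(𝒪)} ‖g_t k v‖^{-β_i} dλ(k) ≤ C t q^{-mnt} ‖v‖^{-β_i}`, where `λ` is the
normalized Haar probability measure of the compact group `SL_{m+n}(𝒪)` (realized here as a
Borel probability measure on `M_{m+n,m+n}(K)` carried by `SL_{m+n}(𝒪)` and invariant under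
left translation by its elements). -/
theorem stmt7 (F : Type*) [Field F] [Fintype F] (m n : ℕ) (hm : 1 ≤ m) (hn : 1 ≤ n)
    (lam : MeasureTheory.Measure (Matrix (Fin (m + n)) (Fin (m + n)) (LaurentSeries F)))
    (hprob : lam (SLO F (m + n)) = 1)
    (hcarried : lam (SLO F (m + n))ᶜ = 0)
    (hinv : ∀ g ∈ SLO F (m + n), lam.map (fun k => g * k) = lam) :
    ∃ C : ℝ, 0 < C ∧ ∀ i : ℕ, 1 ≤ i → i ≤ m → ∀ t : ℤ, 1 ≤ t →
      ∀ v : Matrix (Fin (m + n)) (Fin i) (LaurentSeries F),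
        (∫⁻ k in SLO F (m + n),
            (ENNReal.ofReal (wedgeNorm F (gMat F m n t * k * v))) ^ (-((m : ℝ) / i)) ∂lam)
          ≤ ENNReal.ofReal (C * (t : ℝ) * (Fintype.card F : ℝ) ^ (-(m * n * t : ℤ)))
              * (ENNReal.ofReal (wedgeNorm F v)) ^ (-((m : ℝ) / i)) := by
  have hq := cardR_pos (F := F)
  have hae : ∀ᵐ k ∂lam, k ∈ SLO F (m + n) := hcarried
  have huniv : lam Set.univ ≤ 1 := by
    calc lam Set.univ = lam (SLO F (m + n) ∪ (SLO F (m + n))ᶜ) := by rw [Set.union_compl_self]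
      _ ≤ lam (SLO F (m + n)) + lam (SLO F (m + n))ᶜ := measure_union_le _ _
      _ = 1 := by rw [hprob, hcarried, add_zero]
  rw [Measure.restrict_eq_self_of_ae_mem hae]
  have hC : 0 < (((m + n) * m + 1) * (2 * (Fintype.card F : ℝ) ^ m) ^ m) := by positivity
  refine ⟨(((m + n) * m + 1) * (2 * (Fintype.card F : ℝ) ^ m) ^ m), hC, ?_⟩
  intro i hi1 him t ht v
  lift t to ℕ using by omega
  have ht' : 1 ≤ t := by exact_mod_cast ht
  have hi0 : (0 : ℝ) < (m : ℝ) / i := by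
    have : (0 : ℝ) < i := by exact_mod_cast hi1
    have : (0 : ℝ) < m := by exact_mod_cast hm
    positivity
  simp only [Int.cast_natCast]
  rcases (wedgeNorm_nonneg v).eq_or_lt with hv | hv
  · -- for `v = 0` the right-hand side is infinite
    have hpos : 0 < (((m + n) * m + 1) * (2 * (Fintype.card F : ℝ) ^ m) ^ m) * (t : ℝ) *
        (Fintype.card F : ℝ) ^ (-(m * n * t : ℤ)) := by
      have : (0 : ℝ) < t := by exact_mod_cast ht'
      positivity
    rw [← hv, ENNReal.ofReal_zero, ENNReal.zero_rpow_of_neg (by linarith),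
      ENNReal.mul_top (ENNReal.ofReal_pos.2 hpos).ne']
    exact le_top
  choose h hS hh using fun Q : Fin (m + n) → Fin m → Fin ((m + n) * t * i) → F =>
    exists_completion hn Q
  set R : ℝ≥0∞ := ENNReal.ofReal ((((m + n) * m + 1) * (2 * (Fintype.card F : ℝ) ^ m) ^ m) *
    (t : ℝ) * (Fintype.card F : ℝ) ^ (-(m * n * t : ℤ))) *
    (ENNReal.ofReal (wedgeNorm F v)) ^ (-((m : ℝ) / i)) with hR
  set N := Fintype.card (Fin (m + n) → Fin m → Fin ((m + n) * t * i) → F) with hN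
  let φ : Matrix (Fin (m + n)) (Fin (m + n)) (LaurentSeries F) → ℝ≥0∞ := fun k =>
    (ENNReal.ofReal (wedgeNorm F (gMat F m n t * k * v))) ^ (-((m : ℝ) / i))
  have hpoint : ∀ k ∈ SLO F (m + n), ∑ Q, φ (h Q * k) ≤ N * R := by
    intro k hk
    have hkv := le_wedgeNorm_mul hk v
    have h1 := sum_le rfl hi1 him ht' hS hh (k * v) (hv.trans_le hkv)
    calc ∑ Q, φ (h Q * k) = ∑ Q, (ENNReal.ofReal
          (wedgeNorm F (gMat F m n t * h Q * (k * v)))) ^ (-((m : ℝ) / i)) := by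
          simp only [φ, Matrix.mul_assoc]
      _ ≤ _ := h1
      _ ≤ _ := by
          refine mul_le_mul_right (mul_le_mul_right ?_ _) _
          rw [ENNReal.rpow_neg, ENNReal.rpow_neg, ENNReal.inv_le_inv]
          exact ENNReal.rpow_le_rpow (ENNReal.ofReal_le_ofReal hkv) hi0.le
  have hmain : (N : ℝ≥0∞) * ∫⁻ k, φ k ∂lam ≤ N * R := by
    calc (N : ℝ≥0∞) * ∫⁻ k, φ k ∂lam = ∑ Q, ∫⁻ k, φ (h Q * k) ∂lam := by
          simp only [lintegral_mul_left hinv (hS _) φ]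
          rw [Finset.sum_const, Finset.card_univ, nsmul_eq_mul]
      _ ≤ ∫⁻ k, ∑ Q, φ (h Q * k) ∂lam := sum_lintegral_le _ _ _
      _ ≤ ∫⁻ _, N * R ∂lam := lintegral_mono_ae (hae.mono hpoint)
      _ = N * R * lam Set.univ := lintegral_const _
      _ ≤ N * R := mul_le_of_le_one_right' huniv
  have hN0 : (N : ℝ≥0∞) ≠ 0 := Nat.cast_ne_zero.2 Fintype.card_ne_zero
  exact (ENNReal.mul_le_mul_iff_right hN0 (ENNReal.natCast_ne_top N)).1 hmain
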